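/- With N defined by the recursion of the paper, N d (3d-4) 3 0 equals the classical Kontsevich number of rational degree-d plane curves through 3d-1 generic points, for d = 3 and d = 4; that is, N 3 5 3 0 = 12 and N 4 8 3 0 = 620. -/

import Mathlib

open Finset

/-- Base table for d = 1 (Lemma 3.1): N 1 r s θ. -/
def Ntab1 : ℕ → ℕ → ℕ → ℤ
  | 0, 2, 1 => 1
  | 2, 1, 1 => 1
  | 4, 0, 1 => 2
  | 1, 1, 2 => 1
  | 3, 0, 2 => 2
  | 2, 0, 3 => 1
  | _, _, _ => 0

/-- Base table for d = 2 (Lemma 3.2): N 2 r s θ. -/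
def Ntab2 : ℕ → ℕ → ℕ → ℤ
  | 8, 0, 0 => 92
  | 6, 1, 0 => 18
  | 4, 2, 0 => 4
  | 2, 3, 0 => 1
  | 7, 0, 1 => 34
  | 5, 1, 1 => 6
  | 3, 2, 1 => 1
  | 6, 0, 2 => 8
  | 4, 1, 2 => 1
  | 5, 0, 3 => 1
  | _, _, _ => 0

/-- The recursively defined count `N d r s θ` of rational planar degree-d curves in P³
through r generic lines and s generic points, with θ linear constraints on the plane.
For d ≥ 3 it is 0 unless r + 2s + θ = 3d + 2, s ≤ 3 and θ ≤ 3, and otherwise it is given by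
the WDVV-type recursion of Theorem 3.3, where the quantity
B d₁ d₂ r₁ s₁ r₂ s₂ θ = Σ_{i=0}^{3} N d₁ r₁ s₁ i · N d₂ r₂ s₂ (θ+3-i) is inlined. -/
def N : ℕ → ℕ → ℕ → ℕ → ℤ
  | 0, _, _, _ => 0
  | 1, r, s, θ => Ntab1 r s θ
  | 2, r, s, θ => Ntab2 r s θ
  | (d + 3), r, s, θ =>
    if h : r + 2 * s + θ ≠ 3 * (d + 3) + 2 ∨ s > 3 ∨ θ > 3 then 0
    else
      2 * (d + 3) * N (d + 3) (r - 2) (s + 1) θ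
      + ∑ r1 ∈ Finset.range (r - 3 + 1), ∑ s1 ∈ Finset.range (s + 1),
          ∑ d1 ∈ (Finset.Icc 1 (d + 2)).attach,
            ((r - 3).choose r1 : ℤ) * (s.choose s1 : ℤ) * (d1.1 : ℤ) ^ 2 * ((d + 3 - d1.1 : ℕ) : ℤ) *
              (((d + 3 - d1.1 : ℕ) : ℤ) *
                  (∑ i ∈ Finset.range 4,
                    N d1.1 (r1 + 1) s1 i * N (d + 3 - d1.1) (r - r1 - 2) (s - s1) (θ + 3 - i))
                - (d1.1 : ℤ) *
                  (∑ i ∈ Finset.range 4,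
                    N d1.1 r1 s1 i * N (d + 3 - d1.1) (r - r1 - 1) (s - s1) (θ + 3 - i)))
  termination_by d r s θ => (d, 4 - s)
  decreasing_by
  all_goals push_neg at h
  · exact Prod.Lex.right _ (by omega)
  all_goals
    have hd := d1.2
    simp only [Finset.mem_Icc] at hd
    exact Prod.Lex.left _ _ (by omega)

/-- B d₁ d₂ r₁ s₁ r₂ s₂ θ = Σ_{i=0}^{3} N d₁ r₁ s₁ i · N d₂ r₂ s₂ (θ + 3 - i). -/
def B (d1 d2 r1 s1 r2 s2 θ : ℕ) : ℤ :=
  ∑ i ∈ Finset.range 4, N d1 r1 s1 i * N d2 r2 s2 (θ + 3 - i)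

/-!
Each of the `s` points and the `θ` constraints imposes one linear condition on the plane of the
curve. If `s + θ > 3` no plane is left and `N` vanishes. If `s + θ = 3` the plane is determined,
so `N` is the number of plane curves through `r + s` points. In the recursion with `s + θ = 3`, the
term `N d (r - 2) (s + 1) θ` therefore vanishes, and in the sum `B` only the summand `i = 3 - s₁`
survives, in which both components lie in the same determined plane. Summing the binomial weights
over `r₁` and `s₁` by Vandermonde's identity leaves exactly Kontsevich's recursion.
-/

/-- The number of rational plane curves of degree `d` through `3d - 1` generic points, defined by
Kontsevich's recursion; `0` at the meaningless degree `d = 0`. -/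
def kontsevichNumber : ℕ → ℤ
  | 0 => 0
  | 1 => 1
  | d + 2 => ∑ d₁ ∈ (Icc 1 (d + 1)).attach,
      kontsevichNumber d₁.1 * kontsevichNumber (d + 2 - d₁.1) *
        ((d₁.1 : ℤ) ^ 2 * ((d + 2 - d₁.1 : ℕ) : ℤ) ^ 2 *
            ((3 * (d + 2) - 4).choose (3 * d₁.1 - 2) : ℤ) -
          (d₁.1 : ℤ) ^ 3 * ((d + 2 - d₁.1 : ℕ) : ℤ) *
            ((3 * (d + 2) - 4).choose (3 * d₁.1 - 1) : ℤ))
  decreasing_by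
  all_goals
    have hd := mem_Icc.mp d₁.2
    omega

theorem kontsevichNumber_eq_sum {d : ℕ} (hd : 2 ≤ d) :
    kontsevichNumber d = ∑ d₁ ∈ Icc 1 (d - 1),
      kontsevichNumber d₁ * kontsevichNumber (d - d₁) *
        ((d₁ : ℤ) ^ 2 * ((d - d₁ : ℕ) : ℤ) ^ 2 * ((3 * d - 4).choose (3 * d₁ - 2) : ℤ) -
          (d₁ : ℤ) ^ 3 * ((d - d₁ : ℕ) : ℤ) * ((3 * d - 4).choose (3 * d₁ - 1) : ℤ)) := by
  obtain ⟨d, rfl⟩ := Nat.exists_eq_add_of_le' hd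
  rw [kontsevichNumber]
  exact sum_attach (Icc 1 (d + 1)) fun d₁ ↦ kontsevichNumber d₁ * kontsevichNumber (d + 2 - d₁) *
    ((d₁ : ℤ) ^ 2 * ((d + 2 - d₁ : ℕ) : ℤ) ^ 2 * ((3 * (d + 2) - 4).choose (3 * d₁ - 2) : ℤ) -
      (d₁ : ℤ) ^ 3 * ((d + 2 - d₁ : ℕ) : ℤ) * ((3 * (d + 2) - 4).choose (3 * d₁ - 1) : ℤ))

theorem kontsevichNumber_one : kontsevichNumber 1 = 1 := by
  rw [kontsevichNumber]

theorem kontsevichNumber_two : kontsevichNumber 2 = 1 := by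
  simp [kontsevichNumber_eq_sum, kontsevichNumber_one]

theorem kontsevichNumber_three : kontsevichNumber 3 = 12 := by
  simp [kontsevichNumber_eq_sum (d := 3), sum_Icc_succ_top, kontsevichNumber_one,
    kontsevichNumber_two, Nat.choose]

theorem kontsevichNumber_four : kontsevichNumber 4 = 620 := by
  simp [kontsevichNumber_eq_sum (d := 4), sum_Icc_succ_top, kontsevichNumber_one,
    kontsevichNumber_two, kontsevichNumber_three, Nat.choose]

theorem sum_range_sum_range_choose_mul_choose (m n k : ℕ) :
    ∑ i ∈ range (m + 1), ∑ j ∈ range (n + 1),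
      (if i + j = k then m.choose i * n.choose j else 0) = (m + n).choose k := by
  rw [Nat.add_choose_eq, ← sum_product', ← sum_filter]
  refine sum_subset (fun p hp ↦ mem_antidiagonal.mpr (mem_filter.mp hp).2) fun p hp hp' ↦ ?_
  have hout : m < p.1 ∨ n < p.2 := by
    simp only [mem_filter, mem_product, mem_range, mem_antidiagonal.mp hp, and_true] at hp'
    omega
  rcases hout with h | h <;> simp [Nat.choose_eq_zero_of_lt h]

theorem N_eq_zero_of_add_ne {d r s θ : ℕ} (h : r + 2 * s + θ ≠ 3 * d + 2) : N d r s θ = 0 := by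
  match d with
  | 0 => rw [N]
  | 1 => rw [N, Ntab1.eq_def]; split <;> first | rfl | omega
  | 2 => rw [N, Ntab2.eq_def]; split <;> first | rfl | omega
  | d + 3 => rw [N, dif_pos (Or.inl h)]

theorem N_eq_zero_of_three_lt {d r s θ : ℕ} (hd : 3 ≤ d) (h : 3 < s ∨ 3 < θ) : N d r s θ = 0 := by
  obtain ⟨d, rfl⟩ := Nat.exists_eq_add_of_le' hd
  rw [N, dif_pos (Or.inr h)]

theorem N_recursion {d r s θ : ℕ} (hd : 3 ≤ d) (hdim : r + 2 * s + θ = 3 * d + 2)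
    (hs : s ≤ 3) (hθ : θ ≤ 3) :
    N d r s θ = 2 * d * N d (r - 2) (s + 1) θ +
      ∑ r₁ ∈ range (r - 3 + 1), ∑ s₁ ∈ range (s + 1), ∑ d₁ ∈ Icc 1 (d - 1),
        ((r - 3).choose r₁ : ℤ) * (s.choose s₁ : ℤ) * (d₁ : ℤ) ^ 2 * ((d - d₁ : ℕ) : ℤ) *
          (((d - d₁ : ℕ) : ℤ) * B d₁ (d - d₁) (r₁ + 1) s₁ (r - r₁ - 2) (s - s₁) θ -
            (d₁ : ℤ) * B d₁ (d - d₁) r₁ s₁ (r - r₁ - 1) (s - s₁) θ) := by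
  obtain ⟨d, rfl⟩ := Nat.exists_eq_add_of_le' hd
  rw [N, dif_neg (by omega)]
  push_cast
  refine congrArg _ (sum_congr rfl fun r₁ _ ↦ sum_congr rfl fun s₁ _ ↦ ?_)
  exact sum_attach (Icc 1 (d + 2)) fun d₁ ↦
    ((r - 3).choose r₁ : ℤ) * (s.choose s₁ : ℤ) * (d₁ : ℤ) ^ 2 * ((d + 3 - d₁ : ℕ) : ℤ) *
      (((d + 3 - d₁ : ℕ) : ℤ) * B d₁ (d + 3 - d₁) (r₁ + 1) s₁ (r - r₁ - 2) (s - s₁) θ -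
        (d₁ : ℤ) * B d₁ (d + 3 - d₁) r₁ s₁ (r - r₁ - 1) (s - s₁) θ)

theorem B_eq_zero_of_three_lt_add {d₁ d₂ s₁ s₂ θ : ℕ}
    (hd₁ : ∀ {r s θ}, 3 < s + θ → N d₁ r s θ = 0) (hd₂ : ∀ {r s θ}, 3 < s + θ → N d₂ r s θ = 0)
    (h : 3 < s₁ + s₂ + θ) (r₁ r₂ : ℕ) : B d₁ d₂ r₁ s₁ r₂ s₂ θ = 0 := by
  refine sum_eq_zero fun i _ ↦ ?_
  have hsplit : 3 < s₁ + i ∨ 3 < s₂ + (θ + 3 - i) := by omega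
  rcases hsplit with h₁ | h₂
  · rw [hd₁ h₁, zero_mul]
  · rw [hd₂ h₂, mul_zero]

theorem N_eq_zero_of_three_lt_add_of_forall_lt {d r s θ : ℕ} (hd : 3 ≤ d)
    (ih : ∀ d₁ ∈ Icc 1 (d - 1), ∀ {r s θ}, 3 < s + θ → N d₁ r s θ = 0) (h : 3 < s + θ) :
    N d r s θ = 0 := by
  by_cases hdim : r + 2 * s + θ = 3 * d + 2
  swap
  · exact N_eq_zero_of_add_ne hdim
  by_cases hbound : s ≤ 3 ∧ θ ≤ 3
  swap
  · exact N_eq_zero_of_three_lt hd (by omega)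
  obtain ⟨hs, hθ⟩ := hbound
  rw [N_recursion hd hdim hs hθ,
    N_eq_zero_of_three_lt_add_of_forall_lt (s := s + 1) hd ih (by omega), mul_zero, zero_add]
  refine sum_eq_zero fun r₁ _ ↦ sum_eq_zero fun s₁ hs₁ ↦ sum_eq_zero fun d₁ hd₁ ↦ ?_
  have hd₂ : d - d₁ ∈ Icc 1 (d - 1) := by
    rw [mem_Icc] at hd₁ ⊢
    omega
  rw [mem_range] at hs₁
  have hB (r₁ r₂ : ℕ) : B d₁ (d - d₁) r₁ s₁ r₂ (s - s₁) θ = 0 :=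
    B_eq_zero_of_three_lt_add (ih d₁ hd₁) (ih _ hd₂) (by omega) r₁ r₂
  rw [hB, hB, mul_zero, mul_zero, sub_zero, mul_zero]
  termination_by 4 - s

theorem N_eq_zero_of_three_lt_add {d r s θ : ℕ} (h : 3 < s + θ) : N d r s θ = 0 := by
  induction d using Nat.strong_induction_on generalizing r s θ with
  | _ d ih =>
    match d with
    | 0 => rw [N]
    | 1 => rw [N, Ntab1.eq_def]; split <;> first | rfl | omega
    | 2 => rw [N, Ntab2.eq_def]; split <;> first | rfl | omega
    | d + 3 =>
      refine N_eq_zero_of_three_lt_add_of_forall_lt (by omega) (fun d₁ hd₁ ↦ ih d₁ ?_) h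
      have := mem_Icc.mp hd₁
      omega

theorem B_eq_mul_of_add_eq_three {s₁ s₂ θ : ℕ} (h : s₁ + s₂ + θ = 3) (d₁ d₂ r₁ r₂ : ℕ) :
    B d₁ d₂ r₁ s₁ r₂ s₂ θ = N d₁ r₁ s₁ (3 - s₁) * N d₂ r₂ s₂ (3 - s₂) := by
  have hθ : θ + 3 - (3 - s₁) = 3 - s₂ := by omega
  rw [B, sum_eq_single_of_mem (3 - s₁) (mem_range.mpr (by omega)), hθ]
  intro i _ hi
  have hsplit : 3 < s₁ + i ∨ 3 < s₂ + (θ + 3 - i) := by omega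
  rcases hsplit with h₁ | h₂
  · rw [N_eq_zero_of_three_lt_add h₁, zero_mul]
  · rw [N_eq_zero_of_three_lt_add h₂, mul_zero]

/-- `PlaneCount d` says that the planar curves of degree `d` satisfying conditions that pin down
their plane (`s + θ = 3`) and then put `3d - 1` points on them (`r + s = 3d - 1`; a line meets the
plane in a point) are counted by Kontsevich's number. -/
def PlaneCount (d : ℕ) : Prop :=
  ∀ ⦃r s θ : ℕ⦄, s + θ = 3 → r + s + 1 = 3 * d → N d r s θ = kontsevichNumber d

theorem planeCount_one : PlaneCount 1 := by
  intro r s θ hplane hpoints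
  have hs : s ≤ 2 := by omega
  obtain rfl : r = 2 - s := by omega
  obtain rfl : θ = 3 - s := by omega
  rw [N, kontsevichNumber_one]
  interval_cases s <;> rfl

theorem planeCount_two : PlaneCount 2 := by
  intro r s θ hplane hpoints
  have hs : s ≤ 3 := by omega
  obtain rfl : r = 5 - s := by omega
  obtain rfl : θ = 3 - s := by omega
  rw [N, kontsevichNumber_two]
  interval_cases s <;> rfl

theorem B_eq_ite {d₁ d₂ r₁ r₂ s₁ s₂ θ : ℕ} (hd₁ : PlaneCount d₁) (hd₂ : PlaneCount d₂)
    (hplane : s₁ + s₂ + θ = 3) (hpoints : r₁ + r₂ + (s₁ + s₂) + 2 = 3 * (d₁ + d₂)) :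
    B d₁ d₂ r₁ s₁ r₂ s₂ θ =
      if r₁ + s₁ + 1 = 3 * d₁ then kontsevichNumber d₁ * kontsevichNumber d₂ else 0 := by
  rw [B_eq_mul_of_add_eq_three hplane]
  split_ifs with h
  · rw [hd₁ (by omega) h, hd₂ (by omega) (by omega)]
  · rw [N_eq_zero_of_add_ne (by omega), zero_mul]

theorem planeCount_of_forall_lt {d : ℕ} (hd : 3 ≤ d)
    (ih : ∀ d₁ ∈ Icc 1 (d - 1), PlaneCount d₁) : PlaneCount d := by
  intro r s θ hplane hpoints
  rw [N_recursion hd (by omega) (by omega) (by omega), N_eq_zero_of_three_lt_add (by omega),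
    mul_zero, zero_add, kontsevichNumber_eq_sum (by omega)]
  simp_rw [sum_comm (s := range (s + 1)) (t := Icc 1 (d - 1))]
  rw [sum_comm]
  refine sum_congr rfl fun d₁ hd₁ ↦ ?_
  have hd₁' := mem_Icc.mp hd₁
  have hd₂ : PlaneCount (d - d₁) := ih _ (mem_Icc.mpr (by omega))
  have vandermonde (k : ℕ) : ∑ r₁ ∈ range (r - 3 + 1), ∑ s₁ ∈ range (s + 1),
      (if r₁ + s₁ = k then ((r - 3).choose r₁ : ℤ) * (s.choose s₁ : ℤ) else 0) =
        ((3 * d - 4).choose k : ℤ) := by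
    rw [show 3 * d - 4 = r - 3 + s by omega, ← sum_range_sum_range_choose_mul_choose]
    push_cast
    rfl
  rw [← vandermonde, ← vandermonde]
  simp only [mul_sum, ← sum_sub_distrib]
  refine sum_congr rfl fun r₁ hr₁ ↦ sum_congr rfl fun s₁ hs₁ ↦ ?_
  rw [mem_range] at hr₁ hs₁
  rw [B_eq_ite (ih d₁ hd₁) hd₂ (by omega) (by omega),
    B_eq_ite (ih d₁ hd₁) hd₂ (by omega) (by omega)]
  have h₂ : r₁ + 1 + s₁ + 1 = 3 * d₁ ↔ r₁ + s₁ = 3 * d₁ - 2 := by omega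
  have h₁ : r₁ + s₁ + 1 = 3 * d₁ ↔ r₁ + s₁ = 3 * d₁ - 1 := by omega
  simp only [h₁, h₂]
  split_ifs <;> ring

theorem planeCount (d : ℕ) : PlaneCount d := by
  induction d using Nat.strong_induction_on with
  | _ d ih =>
    match d with
    | 0 => intro r s θ _ hpoints; omega
    | 1 => exact planeCount_one
    | 2 => exact planeCount_two
    | d + 3 =>
      refine planeCount_of_forall_lt (by omega) fun d₁ hd₁ ↦ ih d₁ ?_
      have := mem_Icc.mp hd₁
      omega

theorem stmt10_general {d : ℕ} (hd : 2 ≤ d) : N d (3 * d - 4) 3 0 = kontsevichNumber d :=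
  planeCount d rfl (by omega)

/-- N d (3d-4) 3 0 equals the Kontsevich number of rational degree-d plane curves through
3d - 1 generic points, for d = 3 and d = 4: N 3 5 3 0 = 12 and N 4 8 3 0 = 620. -/
theorem stmt10 : N 3 5 3 0 = 12 ∧ N 4 8 3 0 = 620 :=
  ⟨(stmt10_general (d := 3) (by norm_num)).trans kontsevichNumber_three,
    (stmt10_general (d := 4) (by norm_num)).trans kontsevichNumber_four⟩
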